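/- Let the weighted digraph be weakly connected, let every edge weight be nonzero, and suppose some vertex has out-degree 0. Then the null space of the weighted edge Laplacian equals the null space of A*W: for every x ∈ ℝ^m, Le.mulVec x = 0 if and only if (A*W).mulVec x = 0. -/

import Mathlib

open Matrix

/-- For a weakly connected weighted digraph with nonzero edge weights
in which some vertex has out-degree 0, the null space of the weighted edge Laplacian
`Le = Eᵀ * A * W` equals the null space of `A * W`. -/
theorem nullspace_edgeLaplacian_eq_of_exists_outdeg_zero
    (n m : ℕ) (hn : 2 ≤ n) (hm : 1 ≤ m)
    (tail head : Fin m → Fin n) (hth : ∀ e, tail e ≠ head e)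
    (w : Fin m → ℝ) (hw : ∀ e, w e ≠ 0)
    (E : Matrix (Fin n) (Fin m) ℝ)
    (hE : ∀ v e, E v e = if v = tail e then 1 else if v = head e then -1 else 0)
    (A : Matrix (Fin n) (Fin m) ℝ)
    (hA : ∀ v e, A v e = if v = tail e then 1 else 0)
    (W : Matrix (Fin m) (Fin m) ℝ) (hW : W = Matrix.diagonal w)
    (Le : Matrix (Fin m) (Fin m) ℝ) (hLe : Le = Eᵀ * A * W)
    (hconn : ∀ u v : Fin n,
      Relation.ReflTransGen
        (fun a b => (∃ e, tail e = a ∧ head e = b) ∨ (∃ e, tail e = b ∧ head e = a)) u v)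
    (hzero : ∃ v : Fin n, ∀ e, tail e ≠ v) :
    ∀ x : Fin m → ℝ, Le.mulVec x = 0 ↔ (A * W).mulVec x = 0 := by
  intro x
  have hLe2 : Le.mulVec x = Eᵀ.mulVec ((A * W).mulVec x) := by
    rw [hLe, Matrix.mulVec_mulVec, Matrix.mul_assoc]
  rw [hLe2]
  constructor
  · intro h
    obtain ⟨v0, hv0⟩ := hzero
    have hy0 : (A * W).mulVec x v0 = 0 := by
      rw [← Matrix.mulVec_mulVec]
      simp only [Matrix.mulVec, dotProduct]
      apply Finset.sum_eq_zero
      intro e _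
      rw [hA, if_neg (fun h => hv0 e h.symm), zero_mul]
    generalize (A * W).mulVec x = y at h hy0 ⊢
    have key : ∀ e, y (tail e) = y (head e) := by
      intro e
      have h1 := congrFun h e
      simp only [Matrix.mulVec, dotProduct, Matrix.transpose_apply, Pi.zero_apply] at h1
      have h2 : ∀ v, E v e * y v =
          (if v = tail e then y v else 0) - (if v = head e then y v else 0) := by
        intro v
        rw [hE]
        have := hth e
        by_cases a : v = tail e
        · have b : v ≠ head e := fun b => this (a.symm.trans b)
          simp [a, this]
        · by_cases b : v = head e
          · simp [b, this.symm]
          · simp [a, b]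
      simp only [h2, Finset.sum_sub_distrib, Finset.sum_ite_eq', Finset.sum_ite_eq,
        Finset.mem_univ, if_true] at h1
      linarith
    funext v
    have := hconn v0 v
    induction this with
    | refl => exact hy0
    | tail _ hs ih =>
      rcases hs with ⟨e, rfl, rfl⟩ | ⟨e, rfl, rfl⟩
      · rw [← key e]; exact ih
      · rw [key e]; exact ih
  · intro h
    rw [h, Matrix.mulVec_zero]
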